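/- Let δ > 0 and ε > 0 be real numbers, let X be a geodesic metric space with δ-slim triangles, and let h be an isometry of X. Suppose A : ℝ → X is an isometric embedding (a geodesic line) which is translated by h, i.e. there is a real number ℓ ≥ ε with h(A(t)) = A(t + ℓ) for all t ∈ ℝ. Set m = ⌈2δ/ε⌉. Then for every point x ∈ X with L = dist(x, A(ℝ)) ≥ 3δ, one has d(x, h·x) ≥ (2L − 6δ)/m. -/

import Mathlib

/-!
The Busemann functions `b₊`, `b₋` of the two ends of `A` satisfy `b₊ (h x) = b₊ x - ℓ` and
`b₋ (h x) = b₋ x + ℓ`. Suppose a geodesic `[x, y]` stays more than `2δ` away from `A`. Slimness of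
the quadrilateral with vertices `A(-N)`, `A(N)`, `y`, `x` makes every point of `A([-N, N])`
`δ`-close to `[x, A(-N)]` or `2δ`-close to `[y, A(N)]`; by connectedness both alternatives hold
(as inequalities between distances) at a common point, and letting `N → ∞` gives
`(b₊ x - b₊ y) + (b₋ y - b₋ x) ≤ 6δ`.

If `H = h^m` translates `A` by `T ≥ 2δ`, the left-hand side is `4T ≥ 8δ` for `y = H² x`, so
`[x, H² x]` contains a point `2δ`-close to `A`. By slimness some point of `[x, H x]` or of its
translate `[H x, H² x]` is `3δ`-close to `A`, while the endpoints are at distance `L` from `A`;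
hence `d(x, H x) ≥ 2(L - 3δ)`.
-/

open Metric Filter

/-- `f` parametrizes a geodesic segment from `x` to `y` by arc length on `[0, dist x y]`. -/
def IsGeodesicSegment {X : Type*} [MetricSpace X] (f : ℝ → X) (x y : X) : Prop :=
  f 0 = x ∧ f (dist x y) = y ∧
    ∀ s ∈ Set.Icc (0 : ℝ) (dist x y), ∀ t ∈ Set.Icc (0 : ℝ) (dist x y),
      dist (f s) (f t) = |s - t|

/-- `σ` is (the image of) a geodesic segment joining `x` to `y`. -/
def IsGeodesic {X : Type*} [MetricSpace X] (σ : Set X) (x y : X) : Prop :=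
  ∃ f : ℝ → X, IsGeodesicSegment f x y ∧ σ = f '' Set.Icc 0 (dist x y)

/-- `X` is a geodesic metric space: any two points are joined by a geodesic segment. -/
def GeodesicSpace (X : Type*) [MetricSpace X] : Prop :=
  ∀ x y : X, ∃ σ : Set X, IsGeodesic σ x y

/-- Triangles in `X` are δ-slim: each side lies in the closed δ-neighborhood of the
union of the other two sides. -/
def SlimTriangles (X : Type*) [MetricSpace X] (δ : ℝ) : Prop :=
  ∀ x y z : X, ∀ s₁ s₂ s₃ : Set X,
    IsGeodesic s₁ x y → IsGeodesic s₂ y z → IsGeodesic s₃ z x →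
    ∀ p ∈ s₁, ∃ q ∈ s₂ ∪ s₃, dist p q ≤ δ

lemma isometry_iterate {X : Type*} [PseudoEMetricSpace X] {f : X → X} (hf : Isometry f) (n : ℕ) :
    Isometry f^[n] :=
  Nat.rec isometry_id (fun _ ih => ih.comp hf) n

lemma dist_iterate_le {X : Type*} [PseudoMetricSpace X] {f : X → X} (hf : LipschitzWith 1 f)
    (x : X) (n : ℕ) : dist x (f^[n] x) ≤ n * dist x (f x) := by
  have hstep (k : ℕ) : dist (f^[k] x) (f^[k + 1] x) ≤ dist x (f x) := by
    simpa using (hf.iterate k).dist_le_mul x (f x)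
  simpa using dist_le_range_sum_of_dist_le (f := fun k => f^[k] x) n fun {k} _ => hstep k

section Busemann

variable {X : Type*} [PseudoMetricSpace X] {A : ℝ → X}

lemma isometry_apply_neg (hA : Isometry A) : Isometry fun t => A (-t) :=
  hA.comp (IsometryEquiv.neg ℝ).isometry

lemma dist_apply_of_le (hA : Isometry A) {s t : ℝ} (hst : s ≤ t) : dist (A s) (A t) = t - s := by
  rw [hA.dist_eq, dist_comm, Real.dist_eq, abs_of_nonneg (sub_nonneg.2 hst)]

/-- The Busemann function of the end of `A` at `+∞`, normalized to be `-t` at `A t`. It is defined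
as an infimum rather than a limit; the two agree for a geodesic line `A` by `tendsto_busemann`. -/
noncomputable def busemann (A : ℝ → X) (x : X) : ℝ := ⨅ t, (dist x (A t) - t)

lemma bddBelow_range_dist_sub (hA : Isometry A) (x : X) :
    BddBelow (Set.range fun t => dist x (A t) - t) := by
  refine ⟨-dist x (A 0), ?_⟩
  rintro _ ⟨t, rfl⟩
  have hdist : dist (A 0) (A t) = |t| := by simp [hA.dist_eq, Real.dist_eq]
  linarith [dist_triangle_left (A 0) (A t) x, le_abs_self t]

lemma busemann_le (hA : Isometry A) (x : X) (t : ℝ) : busemann A x ≤ dist x (A t) - t :=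
  ciInf_le (bddBelow_range_dist_sub hA x) t

lemma antitone_dist_sub (hA : Isometry A) (x : X) : Antitone fun t => dist x (A t) - t := by
  intro s t hst
  linarith [dist_triangle x (A s) (A t), dist_apply_of_le hA hst]

open Topology in
lemma tendsto_busemann (hA : Isometry A) (x : X) :
    Tendsto (fun t => dist x (A t) - t) atTop (𝓝 (busemann A x)) :=
  tendsto_atTop_ciInf (antitone_dist_sub hA x) (bddBelow_range_dist_sub hA x)

variable {H : X → X} {T : ℝ}

lemma busemann_apply_of_semiconj (hA : Isometry A) (hH : Isometry H)
    (htrans : Function.Semiconj A (· + T) H) (x : X) :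
    busemann A (H x) = busemann A x - T :=
  calc
    busemann A (H x) = ⨅ t, (dist (H x) (A (t + T)) - (t + T)) :=
      ((Equiv.addRight T).iInf_comp (g := fun t => dist (H x) (A t) - t)).symm
    _ = ⨅ t, (dist x (A t) - t - T) := by
      simp only [htrans.eq, hH.dist_eq, sub_add_eq_sub_sub]
    _ = busemann A x - T := (ciInf_sub (bddBelow_range_dist_sub hA x) T).symm

lemma busemann_neg_apply_of_semiconj (hA : Isometry A) (hH : Isometry H)
    (htrans : Function.Semiconj A (· + T) H) (x : X) :
    busemann (fun t => A (-t)) (H x) = busemann (fun t => A (-t)) x + T := by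
  have htrans_neg : Function.Semiconj (fun t => A (-t)) (· + -T) H := fun t => by
    simpa only [neg_add, neg_neg] using htrans (-t)
  rw [busemann_apply_of_semiconj (isometry_apply_neg hA) hH htrans_neg, sub_neg_eq_add]

lemma infDist_apply_range_of_semiconj (hH : Isometry H)
    (htrans : Function.Semiconj A (· + T) H) (x : X) :
    infDist (H x) (Set.range A) = infDist x (Set.range A) := by
  have hrange : H '' Set.range A = Set.range A := by
    rw [← Set.range_comp, ← htrans.comp_eq]
    exact (Equiv.addRight T).surjective.range_comp A
  rw [← infDist_image hH (x := x), hrange]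

end Busemann

section SlimSpace

variable {X : Type*} [MetricSpace X] {δ : ℝ} {a b x y : X} {σ τ : Set X} {A : ℝ → X}

namespace IsGeodesic

lemma left_mem (hσ : IsGeodesic σ x y) : x ∈ σ := by
  obtain ⟨f, ⟨hx, -, -⟩, rfl⟩ := hσ
  exact ⟨0, ⟨le_rfl, dist_nonneg⟩, hx⟩

lemma right_mem (hσ : IsGeodesic σ x y) : y ∈ σ := by
  obtain ⟨f, ⟨-, hy, -⟩, rfl⟩ := hσ
  exact ⟨dist x y, ⟨dist_nonneg, le_rfl⟩, hy⟩

lemma isPreconnected (hσ : IsGeodesic σ x y) : IsPreconnected σ := by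
  obtain ⟨f, ⟨-, -, hf⟩, rfl⟩ := hσ
  have hlip : LipschitzOnWith 1 f (Set.Icc 0 (dist x y)) :=
    .of_dist_le_mul fun s hs t ht => by simp [hf s hs t ht, Real.dist_eq]
  exact isPreconnected_Icc.image f hlip.continuousOn

lemma dist_add_dist (hσ : IsGeodesic σ x y) {z : X} (hz : z ∈ σ) :
    dist x z + dist z y = dist x y := by
  obtain ⟨f, ⟨hx, hy, hf⟩, rfl⟩ := hσ
  obtain ⟨s, hs, rfl⟩ := hz
  have hxs : dist x (f s) = s := by
    simpa [hx, abs_of_nonneg hs.1] using hf 0 ⟨le_rfl, dist_nonneg⟩ s hs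
  have hsy : dist (f s) y = dist x y - s := by
    simpa [hy, abs_sub_comm s, abs_of_nonneg (sub_nonneg.2 hs.2)] using
      hf s hs (dist x y) ⟨dist_nonneg, le_rfl⟩
  rw [hxs, hsy, add_sub_cancel]

lemma dist_add_dist_le (hσ : IsGeodesic σ x y) {z : X} (hz : z ∈ σ) (p : X) :
    dist x p + dist p y ≤ dist x y + 2 * dist p z := by
  have hxp : dist x p ≤ dist x z + dist p z := dist_comm p z ▸ dist_triangle x z p
  have hpy : dist p y ≤ dist p z + dist z y := dist_triangle p z y
  linarith [hσ.dist_add_dist hz]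

lemma infDist_add_infDist_le (hσ : IsGeodesic σ x y) {S : Set X} {p z : X} {r : ℝ}
    (hp : p ∈ S) (hz : z ∈ σ) (hpz : dist p z ≤ r) :
    infDist x S + infDist y S ≤ dist x y + 2 * r := by
  have hx : infDist x S ≤ dist x p := infDist_le_dist_of_mem hp
  have hy : infDist y S ≤ dist p y := dist_comm y p ▸ infDist_le_dist_of_mem hp
  linarith [hσ.dist_add_dist_le hz p]

end IsGeodesic

lemma isGeodesic_image_Icc (hA : Isometry A) {s t : ℝ} (hst : s ≤ t) :
    IsGeodesic (A '' Set.Icc s t) (A s) (A t) := by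
  have hdist := dist_apply_of_le hA hst
  refine ⟨fun r => A (s + r), ⟨by simp, by simp [hdist], fun r _ r' _ => ?_⟩, ?_⟩
  · rw [hA.dist_eq, Real.dist_eq, add_sub_add_left_eq_sub]
  · rw [hdist, ← Set.image_image A (s + ·), Set.image_const_add_Icc, add_zero, add_sub_cancel]

namespace SlimTriangles

lemma nonneg (hslim : SlimTriangles X δ) (hgeo : GeodesicSpace X) (x : X) : 0 ≤ δ := by
  obtain ⟨σ, hσ⟩ := hgeo x x
  obtain ⟨q, -, hq⟩ := hslim x x x σ σ σ hσ hσ hσ x hσ.left_mem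
  exact dist_nonneg.trans hq

lemma dist_add_dist_le_or_of_forall_lt_dist (hslim : SlimTriangles X δ) (hgeo : GeodesicSpace X)
    (hτ : IsGeodesic τ a b) (hσ : IsGeodesic σ x y) {p : X} (hp : p ∈ τ)
    (hfar : ∀ q ∈ σ, 2 * δ < dist p q) :
    dist x p + dist p a ≤ dist x a + 2 * δ ∨ dist y p + dist p b ≤ dist y b + 4 * δ := by
  obtain ⟨σ_bx, hbx⟩ := hgeo b x
  obtain ⟨σ_xa, hxa⟩ := hgeo x a
  obtain ⟨σ_yb, hyb⟩ := hgeo y b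
  obtain ⟨q, hq | hq, hpq⟩ := hslim a b x τ σ_bx σ_xa hτ hbx hxa p hp
  · obtain ⟨r, hr, hqr⟩ := hslim b x y σ_bx σ σ_yb hbx hσ hyb q hq
    have hpr : dist p r ≤ 2 * δ := by linarith [dist_triangle p q r]
    have hr_yb : r ∈ σ_yb := hr.resolve_left fun hrσ => (hfar r hrσ).not_ge hpr
    exact .inr <| by linarith [hyb.dist_add_dist_le hr_yb p]
  · exact .inl <| by linarith [hxa.dist_add_dist_le hq p]

lemma exists_dist_add_dist_le_of_forall_lt_dist (hslim : SlimTriangles X δ)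
    (hgeo : GeodesicSpace X) (hτ : IsGeodesic τ a b) (hσ : IsGeodesic σ x y)
    (hfar : ∀ p ∈ τ, ∀ q ∈ σ, 2 * δ < dist p q) :
    ∃ p ∈ τ, dist x p + dist y p + dist a b ≤ dist x a + dist y b + 6 * δ := by
  have hδ : 0 ≤ δ := hslim.nonneg hgeo x
  let nearLeft : Set X := {p | dist x p + dist p a ≤ dist x a + 2 * δ}
  let nearRight : Set X := {p | dist y p + dist p b ≤ dist y b + 4 * δ}
  have hclosedLeft : IsClosed nearLeft := isClosed_le (by fun_prop) (by fun_prop)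
  have hclosedRight : IsClosed nearRight := isClosed_le (by fun_prop) (by fun_prop)
  have hcover : τ ⊆ nearLeft ∪ nearRight := fun p hp =>
    hslim.dist_add_dist_le_or_of_forall_lt_dist hgeo hτ hσ hp (hfar p hp)
  have ha : a ∈ nearLeft := by simpa [nearLeft] using hδ
  have hb : b ∈ nearRight := by simpa [nearRight] using hδ
  obtain ⟨p, hp, hpLeft, hpRight⟩ :=
    isPreconnected_closed_iff.1 hτ.isPreconnected nearLeft nearRight hclosedLeft hclosedRight
      hcover ⟨a, hτ.left_mem, ha⟩ ⟨b, hτ.right_mem, hb⟩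
  refine ⟨p, hp, ?_⟩
  have hleft : dist x p + dist p a ≤ dist x a + 2 * δ := hpLeft
  have hright : dist y p + dist p b ≤ dist y b + 4 * δ := hpRight
  linarith [dist_triangle_left a b p]

end SlimTriangles

lemma exists_dist_le_of_busemann_lt (hgeo : GeodesicSpace X) (hslim : SlimTriangles X δ)
    (hA : Isometry A) (hσ : IsGeodesic σ x y)
    (hgap : busemann (fun t => A (-t)) x + busemann A y + 6 * δ <
      busemann A x + busemann (fun t => A (-t)) y) :
    ∃ t, ∃ z ∈ σ, dist (A t) z ≤ 2 * δ := by
  by_contra! hfar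
  have hA_neg : Isometry fun t => A (-t) := isometry_apply_neg hA
  have hbound (N : ℝ) (hN : 0 ≤ N) : busemann A x + busemann (fun t => A (-t)) y ≤
      (dist x (A (-N)) - N) + (dist y (A N) - N) + 6 * δ := by
    have hN' : -N ≤ N := neg_le_self hN
    obtain ⟨_, ⟨t, -, rfl⟩, hsum⟩ := hslim.exists_dist_add_dist_le_of_forall_lt_dist hgeo
      (isGeodesic_image_Icc hA hN') hσ (by rintro _ ⟨t, -, rfl⟩; exact hfar t)
    have hx : busemann A x ≤ dist x (A t) - t := busemann_le hA x t
    have hy : busemann (fun t => A (-t)) y ≤ dist y (A t) + t := by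
      simpa using busemann_le hA_neg y (-t)
    have hdist : dist (A (-N)) (A N) = 2 * N := by
      rw [dist_apply_of_le hA hN', sub_neg_eq_add, two_mul]
    linarith
  have hlim := ge_of_tendsto
    (((tendsto_busemann hA_neg x).add (tendsto_busemann hA y)).add_const (6 * δ))
    ((eventually_ge_atTop 0).mono hbound)
  exact hgap.not_ge hlim

lemma two_mul_infDist_sub_le_dist_apply (hgeo : GeodesicSpace X) (hslim : SlimTriangles X δ)
    (hA : Isometry A) {H : X → X} (hH : Isometry H) {T : ℝ} (hT : 3 * δ < 2 * T)
    (htrans : Function.Semiconj A (· + T) H) (x : X) :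
    2 * infDist x (Set.range A) - 6 * δ ≤ dist x (H x) := by
  -- A shift by `T` need not exceed the `3δ` that forces `[x, H x]` to approach `A`, but `2T` does;
  -- slimness then passes the closeness of `[x, H (H x)]` on to one of the two congruent halves.
  obtain ⟨σ, hσ⟩ := hgeo x (H (H x))
  obtain ⟨σ₁, hσ₁⟩ := hgeo (H x) x
  obtain ⟨σ₂, hσ₂⟩ := hgeo (H (H x)) (H x)
  obtain ⟨t, z, hz, htz⟩ := exists_dist_le_of_busemann_lt hgeo hslim hA hσ (by
    simp only [busemann_apply_of_semiconj hA hH htrans,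
      busemann_neg_apply_of_semiconj hA hH htrans]
    linarith)
  obtain ⟨w, hw, hzw⟩ := hslim _ _ _ _ _ _ hσ hσ₂ hσ₁ z hz
  have htw : dist (A t) w ≤ 3 * δ := by linarith [dist_triangle (A t) z w]
  have hinf := infDist_apply_range_of_semiconj hH htrans
  rcases hw with hw | hw
  · have hle := hσ₂.infDist_add_infDist_le (Set.mem_range_self t) hw htw
    rw [hinf, hinf, hH.dist_eq, dist_comm] at hle
    linarith
  · have hle := hσ₁.infDist_add_infDist_le (Set.mem_range_self t) hw htw
    rw [hinf, dist_comm] at hle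
    linarith

end SlimSpace

theorem far_points_moved_far_single_step
    (δ ε : ℝ) (hδ : 0 < δ) (hε : 0 < ε)
    (X : Type*) [MetricSpace X]
    (hgeo : GeodesicSpace X) (hslim : SlimTriangles X δ)
    (h : X → X) (hiso : Isometry h)
    (A : ℝ → X) (hA : Isometry A)
    (ℓ : ℝ) (hℓ : ε ≤ ℓ) (htrans : ∀ t : ℝ, h (A t) = A (t + ℓ))
    (x : X) (L : ℝ) (hL : L = infDist x (Set.range A)) (hL3 : 3 * δ ≤ L) :
    (2 * L - 6 * δ) / (⌈2 * δ / ε⌉₊ : ℝ) ≤ dist x (h x) := by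
  set m : ℕ := ⌈2 * δ / ε⌉₊
  have hm : (0 : ℝ) < m := Nat.cast_pos.2 (Nat.ceil_pos.2 (by positivity))
  have hshift : 2 * δ ≤ m * ℓ :=
    calc
      2 * δ ≤ m * ε := (div_le_iff₀ hε).1 (Nat.le_ceil _)
      _ ≤ m * ℓ := by gcongr
  have htrans_iterate : Function.Semiconj A (· + m * ℓ) h^[m] := by
    have hsemiconj : Function.Semiconj A (· + ℓ) h := fun t => (htrans t).symm
    simpa only [add_right_iterate, nsmul_eq_mul] using hsemiconj.iterate_right m
  rw [div_le_iff₀' hm]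
  calc
    2 * L - 6 * δ ≤ dist x (h^[m] x) := hL ▸ two_mul_infDist_sub_le_dist_apply hgeo hslim hA
      (isometry_iterate hiso m) (by linarith) htrans_iterate x
    _ ≤ m * dist x (h x) := dist_iterate_le hiso.lipschitz x m
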